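/- If λ ∈ (𝔱^k)^* is a regular value of μ, then the image of the projection π_λ : μ^{-1}(λ) → ℂ^n, (z,w) ↦ z, is exactly the set (ℂ^n)^{lf} of points z ∈ ℂ^n whose stabilizer in T^k is finite; moreover, for every z in this image, the fiber {w ∈ ℂ^n : μ(z,w) = λ} is an affine subspace of ℂ^n (a coset of a linear subspace) of dimension d. -/

import Mathlib

open scoped BigOperators

noncomputable section

/-- The subgroup `T^k ⊆ (ℂ^×)^n` cut out by the integer matrix `A`. -/
def Tk {d n : ℕ} (A : Matrix (Fin d) (Fin n) ℤ) : Set (Fin n → ℂˣ) :=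
  {t | ∀ j : Fin d, ∏ i : Fin n, (t i) ^ (A j i) = 1}

/-- `𝔱^k = ker (A : ℂ^n → ℂ^d)`. -/
def tkLie {d n : ℕ} (A : Matrix (Fin d) (Fin n) ℤ) : Submodule ℂ (Fin n → ℂ) :=
  LinearMap.ker (Matrix.mulVecLin (A.map (Int.cast : ℤ → ℂ)))

/-- The linear functional `x ↦ Σ_i z_i w_i x_i` on `𝔱^k`. -/
def muL {d n : ℕ} (A : Matrix (Fin d) (Fin n) ℤ) (z w : Fin n → ℂ) :
    Module.Dual ℂ (tkLie A) :=
  ∑ i : Fin n, (z i * w i) •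
    ((LinearMap.proj (R := ℂ) (φ := fun _ : Fin n => ℂ) i).comp (tkLie A).subtype)

/-- The moment map `μ : ℂ^n × ℂ^n → (𝔱^k)^*`, `μ(z,w)(x) = Σ_i z_i w_i x_i`, with values in
the (continuous) dual of `𝔱^k`. -/
def muMap {d n : ℕ} (A : Matrix (Fin d) (Fin n) ℤ) :
    (Fin n → ℂ) × (Fin n → ℂ) → (tkLie A →L[ℂ] ℂ) :=
  fun p => LinearMap.toContinuousLinearMap (muL A p.1 p.2)

/-- `λ` is a regular value of `μ` if the derivative of `μ` is surjective at every point of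
`μ⁻¹(λ)`. -/
def IsRegularValue {d n : ℕ} (A : Matrix (Fin d) (Fin n) ℤ) (lam : tkLie A →L[ℂ] ℂ) : Prop :=
  ∀ p : (Fin n → ℂ) × (Fin n → ℂ), muMap A p = lam →
    Function.Surjective (fderiv ℂ (muMap A) p)

/-- The stabilizer of `z ∈ ℂ^n` in `T^k`. -/
def stab {d n : ℕ} (A : Matrix (Fin d) (Fin n) ℤ) (z : Fin n → ℂ) : Set (Fin n → ℂˣ) :=
  {t | t ∈ Tk A ∧ ∀ i, (t i : ℂ) * z i = z i}

/-!
The stabilizer of `z` is an intersection of kernels of characters of `(ℂˣ)ⁿ`: those given by the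
rows of `A`, and the coordinates `t_i` with `z_i ≠ 0`. The common kernel of the characters given by
the rows of an integer matrix `M` is finite iff `M` is injective on `ℂⁿ`: the exponentials of a line
in `ker M` are infinitely many points of the common kernel, while if `M` is injective then
`c = det (Mᵀ M) ≠ 0` and `adj (Mᵀ M) Mᵀ M = c`, so that every point of the common kernel has order
dividing `c`. Hence `z` has finite stabilizer iff no nonzero `x ∈ 𝔱^k` satisfies `z_i x_i = 0` for
all `i`.

The map `w ↦ μ(z, w)` is the transpose of `x ↦ z x` on `𝔱^k`, so this is also equivalent to its
surjectivity. Surjectivity holds at every `(z, w) ∈ μ⁻¹(λ)`: since `μ` only sees the product `z w`,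
one may replace `w` by `w' = z z⁻¹ w`, which vanishes where `z` does, and then the derivative of `μ`
at `(z, w')` has the same range as `μ(z, ·)`. The fibers are therefore cosets of the kernel of a
surjective linear map `ℂⁿ → (𝔱^k)^*`, of dimension `n - dim 𝔱^k = rank A`.
-/

open Matrix

section LinearAlgebra

theorem setOf_map_eq_map_eq_image_ker {R V W : Type*} [Ring R] [AddCommGroup V] [AddCommMonoid W]
    [Module R V] [Module R W] (f : V →ₗ[R] W) (v₀ : V) :
    {v | f v = f v₀} = (fun v ↦ v₀ + v) '' (f.ker : Set V) := by
  ext v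
  rw [Set.image_add_left, Set.mem_preimage, SetLike.mem_coe, LinearMap.mem_ker, Set.mem_ofPred_eq]
  refine ⟨fun h ↦ ?_, fun h ↦ ?_⟩
  · rw [map_add, h, ← map_add, neg_add_cancel, map_zero]
  · rw [← add_neg_cancel_left v₀ v, map_add, h, add_zero]

theorem finrank_le_finrank_of_algebraMap_comp_mem {R S ι : Type*} [CommRing R] [CommRing S]
    [IsDomain S] [Algebra R S] [FaithfulSMul R S] [IsNoetherianRing S] [Finite ι]
    {N : Submodule R (ι → R)} {P : Submodule S (ι → S)}
    (h : ∀ v ∈ N, algebraMap R S ∘ v ∈ P) : Module.finrank R N ≤ Module.finrank S P := by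
  obtain ⟨v, hv⟩ := exists_linearIndependent_of_le_finrank (le_refl (Module.finrank R N))
  have hv' : LinearIndependent S fun i ↦ algebraMap R S ∘ (v i : ι → R) :=
    linearIndependent_algebraMap_comp_iff.2 (hv.map' N.subtype N.ker_subtype)
  let u : Fin (Module.finrank R N) → P := fun i ↦ ⟨_, h _ (v i).2⟩
  have hu : LinearIndependent S u := .of_comp P.subtype hv'
  simpa using hu.fintype_card_le_finrank

theorem rank_add_finrank_ker_mulVecLin {R κ ι : Type*} [CommRing R] [IsDomain R] [Fintype ι]
    (M : Matrix κ ι R) : M.rank + Module.finrank R M.mulVecLin.ker = Fintype.card ι := by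
  rw [rank, ← M.mulVecLin.quotKerEquivRange.finrank_eq, Submodule.finrank_quotient_add_finrank,
    Module.finrank_fintype_fun_eq_card]

theorem rank_map_algebraMap {R : Type*} (S : Type*) {κ ι : Type*} [CommRing R] [CommRing S]
    [IsDomain S] [Algebra R S] [FaithfulSMul R S] [IsNoetherianRing S] [Finite κ] [Fintype ι]
    (M : Matrix κ ι R) : (M.map (algebraMap R S)).rank = M.rank := by
  have : IsDomain R := .of_faithfulSMul R S
  have map_mulVec (v : ι → R) :
      M.map (algebraMap R S) *ᵥ (algebraMap R S ∘ v) = algebraMap R S ∘ (M *ᵥ v) :=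
    funext fun j ↦ (RingHom.map_mulVec (algebraMap R S) M v j).symm
  have rank_le : M.rank ≤ (M.map (algebraMap R S)).rank :=
    finrank_le_finrank_of_algebraMap_comp_mem <| by
      rintro _ ⟨v, rfl⟩
      exact ⟨_, map_mulVec v⟩
  have ker_le : Module.finrank R M.mulVecLin.ker ≤
      Module.finrank S (M.map (algebraMap R S)).mulVecLin.ker :=
    finrank_le_finrank_of_algebraMap_comp_mem fun v hv ↦ by
      have hv : M *ᵥ v = 0 := hv
      simp only [LinearMap.mem_ker, mulVecLin_apply, map_mulVec, hv]
      ext; simp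
  have hR := rank_add_finrank_ker_mulVecLin M
  have hS := rank_add_finrank_ker_mulVecLin (M.map (algebraMap R S))
  omega

theorem exists_mul_eq_smul_one_of_mulVec_injective {R κ ι : Type*} [CommRing R] [LinearOrder R]
    [IsStrictOrderedRing R] [Fintype κ] [Fintype ι] [DecidableEq ι] {M : Matrix κ ι R}
    (hM : Function.Injective M.mulVec) : ∃ c : R, c ≠ 0 ∧ ∃ N : Matrix ι κ R, N * M = c • 1 := by
  refine ⟨(Mᵀ * M).det, fun hdet ↦ ?_, (Mᵀ * M).adjugate * Mᵀ, ?_⟩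
  · obtain ⟨v, hv, hMv⟩ := exists_mulVec_eq_zero_iff.2 hdet
    have norm_eq_zero : M *ᵥ v ⬝ᵥ M *ᵥ v = 0 := by
      rw [dotProduct_mulVec, ← mulVec_transpose, mulVec_mulVec, hMv, zero_dotProduct]
    exact hv (hM (by rw [dotProduct_self_eq_zero.1 norm_eq_zero, mulVec_zero]))
  · rw [Matrix.mul_assoc, adjugate_mul]

end LinearAlgebra

section Derivative

theorem fderiv_linearMap_mul_apply {𝕜 E F : Type*} [NontriviallyNormedField 𝕜] [CompleteSpace 𝕜]
    [NormedCommRing E] [NormedAlgebra 𝕜 E] [FiniteDimensional 𝕜 E] [NormedAddCommGroup F]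
    [NormedSpace 𝕜 F] (L : E →ₗ[𝕜] F) (p q : E × E) :
    fderiv 𝕜 (fun p : E × E ↦ L (p.1 * p.2)) p q = L (p.1 * q.2 + p.2 * q.1) := by
  have hmul := (hasFDerivAt_fst (𝕜 := 𝕜) (p := p)).mul hasFDerivAt_snd
  exact congrArg (· q) (L.toContinuousLinearMap.hasFDerivAt.comp p hmul).fderiv

end Derivative

section MonomialMaps

variable {ι κ ν G : Type*} [Fintype ι] [CommGroup G]

/-- The homomorphism `G^ι → G^κ` whose `j`-th coordinate is the monomial (character)
`t ↦ ∏ᵢ tᵢ ^ M j i` with exponents the `j`-th row of the integer matrix `M`. -/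
def monomialMap (M : Matrix κ ι ℤ) : (ι → G) →* (κ → G) where
  toFun t j := ∏ i, t i ^ M j i
  map_one' := by ext; simp
  map_mul' s t := by ext; simp [mul_zpow, Finset.prod_mul_distrib]

theorem monomialMap_apply (M : Matrix κ ι ℤ) (t : ι → G) (j : κ) :
    monomialMap M t j = ∏ i, t i ^ M j i := rfl

theorem monomialMap_mul [Fintype κ] (N : Matrix ν κ ℤ) (M : Matrix κ ι ℤ) (t : ι → G) :
    monomialMap (N * M) t = monomialMap N (monomialMap M t) := by
  have zpow_sum (g : G) (e : κ → ℤ) : g ^ ∑ j, e j = ∏ j, g ^ e j :=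
    map_prod (zpowersHom G g) (fun j ↦ Multiplicative.ofAdd (e j)) Finset.univ
  ext l
  simp only [monomialMap_apply, mul_apply, zpow_sum, ← Finset.prod_zpow, ← _root_.zpow_mul,
    mul_comm (N l _)]
  exact Finset.prod_comm

theorem monomialMap_smul_one [DecidableEq ι] (c : ℤ) (t : ι → G) :
    monomialMap (c • (1 : Matrix ι ι ℤ)) t = t ^ c := by
  ext i
  rw [monomialMap_apply, Finset.prod_eq_single i] <;>
    simp +contextual [-zsmul_one, one_apply, eq_comm]

theorem finite_setOf_zpow_eq_one {R : Type*} [CommRing R] [IsDomain R] {c : ℤ} (hc : c ≠ 0) :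
    {u : Rˣ | u ^ c = 1}.Finite := by
  have : NeZero c.natAbs := ⟨Int.natAbs_ne_zero.2 hc⟩
  have hfin : Finite (rootsOfUnity c.natAbs R) := inferInstance
  exact (Set.finite_coe_iff.1 hfin).subset fun _ ↦ pow_natAbs_eq_one.2

theorem finite_ker_monomialMap {R : Type*} [CommRing R] [IsDomain R] [Finite κ]
    {M : Matrix κ ι ℤ} (hM : Function.Injective M.mulVec) :
    ((monomialMap M : (ι → Rˣ) →* (κ → Rˣ)).ker : Set (ι → Rˣ)).Finite := by
  classical
  have := Fintype.ofFinite κ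
  obtain ⟨c, hc, N, hN⟩ := exists_mul_eq_smul_one_of_mulVec_injective hM
  refine (Set.Finite.pi' fun _ : ι ↦ finite_setOf_zpow_eq_one (R := R) hc).subset fun t ht ↦ ?_
  have ht_pow : t ^ c = 1 := by
    rw [← monomialMap_smul_one, ← hN, monomialMap_mul, MonoidHom.mem_ker.1 ht, map_one]
  exact congrFun ht_pow

/-- The coordinatewise exponential, from the Lie algebra `ℂ^ι` to the torus `(ℂˣ)^ι`. -/
def torusExp (x : ι → ℂ) (i : ι) : ℂˣ :=
  Units.mk0 (Complex.exp (x i)) (Complex.exp_ne_zero _)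

theorem monomialMap_torusExp (M : Matrix κ ι ℤ) (x : ι → ℂ) :
    monomialMap M (torusExp x) = torusExp (M.map (Int.cast : ℤ → ℂ) *ᵥ x) := by
  ext j
  simp [monomialMap_apply, torusExp, mulVec, dotProduct, Complex.exp_sum, Complex.exp_int_mul]

theorem infinite_ker_monomialMap {M : Matrix κ ι ℤ} {x : ι → ℂ} (hx : x ≠ 0)
    (hMx : M.map (Int.cast : ℤ → ℂ) *ᵥ x = 0) :
    ((monomialMap M : (ι → ℂˣ) →* (κ → ℂˣ)).ker : Set (ι → ℂˣ)).Infinite := by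
  obtain ⟨i, hi⟩ := Function.ne_iff.1 hx
  have exp_mem (a : ℂ) : torusExp (a • x) ∈ (monomialMap M : (ι → ℂˣ) →* (κ → ℂˣ)).ker := by
    rw [MonoidHom.mem_ker, monomialMap_torusExp, mulVec_smul, hMx, smul_zero]
    ext
    simp [torusExp]
  have coord_surj : ({0}ᶜ : Set ℂ) ⊆
      (fun t : ι → ℂˣ ↦ (t i : ℂ)) '' (monomialMap M : (ι → ℂˣ) →* (κ → ℂˣ)).ker := by
    intro y hy
    refine ⟨_, exp_mem (Complex.log y / x i), ?_⟩
    simp [torusExp, div_mul_cancel₀ _ hi, Complex.exp_log hy]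
  exact fun hfin ↦ (Set.finite_singleton (0 : ℂ)).infinite_compl ((hfin.image _).subset coord_surj)

theorem finite_ker_monomialMap_iff [Finite κ] (M : Matrix κ ι ℤ) :
    ((monomialMap M : (ι → ℂˣ) →* (κ → ℂˣ)).ker : Set (ι → ℂˣ)).Finite ↔
      (M.map (Int.cast : ℤ → ℂ)).mulVecLin.ker = ⊥ := by
  refine ⟨fun hfin ↦ ?_, fun hker ↦ finite_ker_monomialMap fun u v huv ↦ ?_⟩
  · refine (Submodule.eq_bot_iff _).2 fun x hMx ↦ ?_
    by_contra hx
    exact infinite_ker_monomialMap hx hMx hfin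
  · have map_mulVec (v : ι → ℤ) :
        (M.map (Int.cast : ℤ → ℂ)).mulVecLin (Int.cast ∘ v) = Int.cast ∘ (M *ᵥ v) :=
      funext fun j ↦ (RingHom.map_mulVec (Int.castRingHom ℂ) M v j).symm
    exact Int.cast_injective.comp_left
      (LinearMap.ker_eq_bot.1 hker (by rw [map_mulVec, map_mulVec, huv]))

end MonomialMaps

section Stabilizers

variable {d n : ℕ} (A : Matrix (Fin d) (Fin n) ℤ)

/-- The Lie algebra of the stabilizer of `z` in `T^k`. -/
def stabLie (z : Fin n → ℂ) : Submodule ℂ (Fin n → ℂ) :=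
  tkLie A ⊓ (LinearMap.mulLeft ℂ z).ker

/-- The exponent matrix of the characters that cut out the stabilizer of `z` in `(ℂˣ)ⁿ`: the rows
of `A`, and the `i`-th unit vector for every `i` with `z i ≠ 0`. -/
def stabMatrix (z : Fin n → ℂ) : Matrix (Fin d ⊕ {i // z i ≠ 0}) (Fin n) ℤ :=
  fromRows A ((1 : Matrix (Fin n) (Fin n) ℤ).submatrix Subtype.val id)

theorem ker_monomialMap_stabMatrix (z : Fin n → ℂ) :
    ((monomialMap (stabMatrix A z) : (Fin n → ℂˣ) →* _).ker : Set (Fin n → ℂˣ)) = stab A z := by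
  have fixes_iff (u : ℂˣ) (a : ℂ) : u * a = a ↔ (a ≠ 0 → u = 1) := by
    rw [mul_left_eq_self₀, Units.val_eq_one, or_iff_not_imp_right]
  ext t
  simp [stabMatrix, stab, Tk, funext_iff, monomialMap_apply, one_apply, fixes_iff]

theorem ker_mulVecLin_stabMatrix (z : Fin n → ℂ) :
    ((stabMatrix A z).map (Int.cast : ℤ → ℂ)).mulVecLin.ker = stabLie A z := by
  ext x
  simp [stabMatrix, stabLie, tkLie, funext_iff, mulVec, dotProduct, one_apply,
    or_iff_not_imp_left]

theorem finite_stab_iff (z : Fin n → ℂ) : (stab A z).Finite ↔ stabLie A z = ⊥ := by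
  rw [← ker_monomialMap_stabMatrix, finite_ker_monomialMap_iff, ker_mulVecLin_stabMatrix]

end Stabilizers

section MomentMap

variable {d n : ℕ} (A : Matrix (Fin d) (Fin n) ℤ)

/-- The restriction map `(𝔱ⁿ)^* → (𝔱^k)^*` dual to the inclusion `𝔱^k ⊆ 𝔱ⁿ = ℂⁿ`, with `(𝔱ⁿ)^*`
identified with `ℂⁿ` by the dot product. -/
def inclusionDual : (Fin n → ℂ) →ₗ[ℂ] (tkLie A →L[ℂ] ℂ) :=
  LinearMap.toContinuousLinearMap.toLinearMap ∘ₗ (tkLie A).subtype.dualMap ∘ₗ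
    (dotProductEquiv ℂ (Fin n)).toLinearMap

theorem inclusionDual_apply (y : Fin n → ℂ) (x : tkLie A) : inclusionDual A y x = y ⬝ᵥ x := rfl

theorem muMap_eq_inclusionDual (p : (Fin n → ℂ) × (Fin n → ℂ)) :
    muMap A p = inclusionDual A (p.1 * p.2) := by
  ext x
  simp [inclusionDual_apply, muMap, muL, dotProduct]

theorem fderiv_muMap_apply (p q : (Fin n → ℂ) × (Fin n → ℂ)) :
    fderiv ℂ (muMap A) p q = inclusionDual A (p.1 * q.2 + p.2 * q.1) := by
  rw [funext (muMap_eq_inclusionDual A)]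
  exact fderiv_linearMap_mul_apply (𝕜 := ℂ) (F := tkLie A →L[ℂ] ℂ) (inclusionDual A) p q

theorem surjective_inclusionDual_comp_mulLeft_iff (z : Fin n → ℂ) :
    Function.Surjective (inclusionDual A ∘ₗ LinearMap.mulLeft ℂ z) ↔ stabLie A z = ⊥ := by
  have transpose_eq : inclusionDual A ∘ₗ LinearMap.mulLeft ℂ z =
      LinearMap.toContinuousLinearMap.toLinearMap ∘ₗ
        (LinearMap.mulLeft ℂ z ∘ₗ (tkLie A).subtype).dualMap ∘ₗ
          (dotProductEquiv ℂ (Fin n)).toLinearMap := by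
    ext w x
    simp [inclusionDual_apply, dotProduct, mul_assoc, mul_left_comm]
  have injective_iff : Function.Injective (LinearMap.mulLeft ℂ z ∘ₗ (tkLie A).subtype) ↔
      stabLie A z = ⊥ := by
    rw [← LinearMap.ker_eq_bot, LinearMap.ker_comp, ← Submodule.disjoint_iff_comap_eq_bot, stabLie,
      disjoint_iff]
  rw [← injective_iff, ← LinearMap.dualMap_surjective_iff, transpose_eq]
  simp

theorem rank_add_finrank_tkLie : A.rank + Module.finrank ℂ (tkLie A) = n := by
  rw [← rank_map_algebraMap ℂ A]
  exact (rank_add_finrank_ker_mulVecLin (A.map (algebraMap ℤ ℂ))).trans (Fintype.card_fin n)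

variable {A}

theorem finrank_ker_of_surjective {f : (Fin n → ℂ) →ₗ[ℂ] (tkLie A →L[ℂ] ℂ)}
    (hf : Function.Surjective f) : Module.finrank ℂ f.ker = A.rank := by
  have finrank_dual : Module.finrank ℂ (tkLie A →L[ℂ] ℂ) = Module.finrank ℂ (tkLie A) :=
    LinearMap.toContinuousLinearMap.symm.finrank_eq.trans Subspace.dual_finrank_eq
  have rank_nullity := LinearMap.finrank_range_add_finrank_ker (K := ℂ) (V₂ := tkLie A →L[ℂ] ℂ) f
  rw [LinearMap.range_eq_top.2 hf, finrank_top, finrank_dual, Module.finrank_fin_fun]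
    at rank_nullity
  have := rank_add_finrank_tkLie A
  omega

theorem IsRegularValue.surjective_inclusionDual_comp_mulLeft {lam : tkLie A →L[ℂ] ℂ}
    (hreg : IsRegularValue A lam) {z w : Fin n → ℂ} (h : muMap A (z, w) = lam) :
    Function.Surjective (inclusionDual A ∘ₗ LinearMap.mulLeft ℂ z) := by
  have mul_eq : z * (z * (z⁻¹ * w)) = z * w := by
    ext i
    simp [← mul_assoc, mul_self_mul_inv]
  have hlam : muMap A (z, z * (z⁻¹ * w)) = lam := by
    rw [← h, muMap_eq_inclusionDual, muMap_eq_inclusionDual, mul_eq]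
  intro φ
  obtain ⟨⟨u, v⟩, rfl⟩ := hreg _ hlam φ
  refine ⟨v + z⁻¹ * w * u, ?_⟩
  rw [fderiv_muMap_apply, LinearMap.comp_apply, LinearMap.mulLeft_apply]
  congr 1
  ring

theorem IsRegularValue.exists_muMap_eq_iff {lam : tkLie A →L[ℂ] ℂ} (hreg : IsRegularValue A lam)
    (z : Fin n → ℂ) : (∃ w, muMap A (z, w) = lam) ↔ (stab A z).Finite := by
  rw [finite_stab_iff, ← surjective_inclusionDual_comp_mulLeft_iff]
  refine ⟨fun ⟨w, hw⟩ ↦ hreg.surjective_inclusionDual_comp_mulLeft hw, fun hsurj ↦ ?_⟩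
  obtain ⟨w, hw⟩ := hsurj lam
  exact ⟨w, (muMap_eq_inclusionDual A (z, w)).trans hw⟩

end MomentMap

theorem stmt1_general {d n : ℕ} (A : Matrix (Fin d) (Fin n) ℤ) (lam : tkLie A →L[ℂ] ℂ)
    (hreg : IsRegularValue A lam) :
    {z : Fin n → ℂ | ∃ w : Fin n → ℂ, muMap A (z, w) = lam} = {z | (stab A z).Finite} ∧
    ∀ z : Fin n → ℂ, (∃ w : Fin n → ℂ, muMap A (z, w) = lam) →
      ∃ (w₀ : Fin n → ℂ) (W : Submodule ℂ (Fin n → ℂ)), Module.finrank ℂ W = A.rank ∧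
        {w : Fin n → ℂ | muMap A (z, w) = lam} = (fun v => w₀ + v) '' (W : Set (Fin n → ℂ)) := by
  refine ⟨Set.ext hreg.exists_muMap_eq_iff, ?_⟩
  rintro z ⟨w₀, hw₀⟩
  have hsurj := hreg.surjective_inclusionDual_comp_mulLeft hw₀
  refine ⟨w₀, (inclusionDual A ∘ₗ LinearMap.mulLeft ℂ z).ker, finrank_ker_of_surjective hsurj, ?_⟩
  rw [← setOf_map_eq_map_eq_image_ker, ← hw₀]
  simp only [muMap_eq_inclusionDual, LinearMap.comp_apply, LinearMap.mulLeft_apply]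

/-- If `λ` is a regular value of `μ`, then the image of the projection
`π_λ : μ⁻¹(λ) → ℂ^n`, `(z,w) ↦ z`, is exactly the locally free locus `(ℂ^n)^{lf}` of points
with finite `T^k`-stabilizer, and all fibers of `π_λ` are `d`-dimensional affine subspaces
of `ℂ^n` (cosets of linear subspaces). -/
theorem stmt1 {d n : ℕ} (hd : 0 < d) (hn : 0 < n) (hdn : d ≤ n) (k : ℕ) (hk : k = n - d)
    (A : Matrix (Fin d) (Fin n) ℤ)
    (hcols : ∀ i : Fin n, (fun j => A j i) ≠ (0 : Fin d → ℤ))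
    (hrank : (A.map (Int.cast : ℤ → ℚ)).rank = d)
    (lam : tkLie A →L[ℂ] ℂ) (hreg : IsRegularValue A lam) :
    {z : Fin n → ℂ | ∃ w : Fin n → ℂ, muMap A (z, w) = lam} = {z | (stab A z).Finite} ∧
    ∀ z : Fin n → ℂ, (∃ w : Fin n → ℂ, muMap A (z, w) = lam) →
      ∃ (w₀ : Fin n → ℂ) (W : Submodule ℂ (Fin n → ℂ)), Module.finrank ℂ W = d ∧
        {w : Fin n → ℂ | muMap A (z, w) = lam} = (fun v => w₀ + v) '' (W : Set (Fin n → ℂ)) := by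
  have rank_eq : A.rank = d := (rank_map_algebraMap ℚ A).symm.trans hrank
  simpa only [rank_eq] using stmt1_general A lam hreg
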